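/- Let F be a field, R the ring of ternions over F, and n ≥ 1. Two vectors X, Y ∈ R^{n+1} lie in the same orbit under the action of GL_{n+1}(R) (acting by right multiplication of row vectors by invertible matrices over R) if and only if the right ideals I_X and I_Y of R generated by their respective coordinates coincide. -/

import Mathlib

set_option synthInstance.maxHeartbeats 1000000
set_option maxHeartbeats 1000000

/-- The ring of ternions over a field `F`: the subring of `2×2` matrices over `F`
consisting of all upper triangular matrices. -/
def ternions (F : Type) [Field F] : Subring (Matrix (Fin 2) (Fin 2) F) where
  carrier := {A | A 1 0 = 0}
  zero_mem' := by simp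
  one_mem' := by simp [Matrix.one_apply]
  add_mem' := by
    intro a b ha hb
    simp only [Set.mem_setOf_eq, Matrix.add_apply] at *
    simp [ha, hb]
  neg_mem' := by
    intro a ha
    simp only [Set.mem_setOf_eq, Matrix.neg_apply] at *
    simp [ha]
  mul_mem' := by
    intro a b ha hb
    simp only [Set.mem_setOf_eq, Matrix.mul_apply, Fin.sum_univ_two] at *
    simp [ha, hb]

/-!
If `X` and `Y` generate the same right ideal, there are square matrices with `X * C = Y` and
`Y * B = X`, and then `X * (C + (1 - C * B) * T) = Y` for every `T`. A suitable `T` makes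
`C + (1 - C * B) * T` invertible when the ring of square matrices has stable range one in the sense
of Bass. Stable range one holds for `End V` with `V` a finite-dimensional vector space, where one
maps the kernel of an endomorphism isomorphically onto a complement of its range; it passes to
semisimple rings by Wedderburn–Artin and lifts modulo the Jacobson radical. The ternions form a
finite-dimensional algebra, so they are semisimple modulo their radical.
-/

open Matrix

/-- Bass's stable range one condition: whenever the right ideal generated by `a` and `b` is the
whole ring, some `a + b * t` is a unit. -/
def HasStableRangeOne (R : Type*) [Ring R] : Prop :=
  ∀ ⦃a b x y : R⦄, a * x + b * y = 1 → ∃ t, IsUnit (a + b * t)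

namespace HasStableRangeOne

theorem of_isLocalHom {R S : Type*} [Ring R] [Ring S] (hS : HasStableRangeOne S) (f : R →+* S)
    (hf : Function.Surjective f) [IsLocalHom f] : HasStableRangeOne R := by
  intro a b x y h
  have hf_ab : f a * f x + f b * f y = 1 := by simp only [← map_mul, ← map_add, h, map_one]
  obtain ⟨s, hs⟩ := hS hf_ab
  obtain ⟨t, rfl⟩ := hf s
  exact ⟨t, isUnit_of_map_unit f _ (by simpa only [map_add, map_mul] using hs)⟩

theorem of_ringEquiv {R S : Type*} [Ring R] [Ring S] (hS : HasStableRangeOne S) (e : R ≃+* S) :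
    HasStableRangeOne R :=
  have : IsLocalHom (e : R →+* S) := ⟨fun _ ↦ (isUnit_map_iff e _).1⟩
  hS.of_isLocalHom (e : R →+* S) e.surjective

theorem pi {ι : Type*} {R : ι → Type*} [∀ i, Ring (R i)] (h : ∀ i, HasStableRangeOne (R i)) :
    HasStableRangeOne (∀ i, R i) := by
  intro a b x y hab
  choose t ht using fun i ↦ h i (congrFun hab i)
  exact ⟨t, Pi.isUnit_iff.2 ht⟩

end HasStableRangeOne

section DivisionRing

variable {D V : Type*} [DivisionRing D] [AddCommGroup V] [Module D V] [FiniteDimensional D V]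

theorem exists_disjoint_ker_disjoint_range (a : Module.End D V) :
    ∃ s : Module.End D V, Disjoint a.ker s.ker ∧ Disjoint a.range s.range := by
  obtain ⟨W, hW⟩ := a.range.exists_isCompl
  have hdim : Module.finrank D a.ker = Module.finrank D W := by
    have := a.finrank_range_add_finrank_ker
    have := Submodule.finrank_add_eq_of_isCompl hW
    omega
  let e : a.ker ≃ₗ[D] W := LinearEquiv.ofFinrankEq _ _ hdim
  obtain ⟨g, hg⟩ := LinearMap.exists_extend e.toLinearMap
  refine ⟨W.subtype ∘ₗ g, Submodule.disjoint_def.2 fun v hav hgv ↦ ?_,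
    hW.disjoint.mono_right fun _ ⟨v, hv⟩ ↦ hv ▸ (g v).2⟩
  have hev : e ⟨v, hav⟩ = g v := (LinearMap.congr_fun hg ⟨v, hav⟩).symm
  have hgv' : g v = 0 := Subtype.ext hgv
  simpa using e.map_eq_zero_iff.1 (hev.trans hgv')

-- The opposite ring matches `Matrix n n D` acting on row vectors.
theorem hasStableRangeOne_end_mulOpposite : HasStableRangeOne (Module.End D V)ᵐᵒᵖ := by
  intro a b x y h
  obtain ⟨s, hker, hrange⟩ := exists_disjoint_ker_disjoint_range a.unop
  refine ⟨y * .op s, isUnit_unop.1 <| (LinearMap.isUnit_iff_ker_eq_bot _).2 <|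
    LinearMap.ker_eq_bot'.2 fun v hv ↦ ?_⟩
  replace hv : a.unop v + s (y.unop (b.unop v)) = 0 := hv
  have hxy : x.unop (a.unop v) + y.unop (b.unop v) = v :=
    LinearMap.congr_fun (congrArg (·.unop) h) v
  have hav : a.unop v = 0 :=
    Submodule.disjoint_def.1 hrange _ ⟨v, rfl⟩
      (eq_neg_of_add_eq_zero_left hv ▸ neg_mem ⟨_, rfl⟩)
  rw [hav, map_zero, zero_add] at hxy
  rw [hav, hxy, zero_add] at hv
  exact Submodule.disjoint_def.1 hker v hav hv

theorem hasStableRangeOne_matrix_divisionRing (n : Type*) [Fintype n] [DecidableEq n] :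
    HasStableRangeOne (Matrix n n D) :=
  hasStableRangeOne_end_mulOpposite.of_ringEquiv matrixRingEquivEndVecMulOpposite

end DivisionRing

theorem hasStableRangeOne_of_isSemisimpleRing (R : Type*) [Ring R] [IsSemisimpleRing R] :
    HasStableRangeOne R := by
  obtain ⟨_, _, _, _, _, ⟨e⟩⟩ := IsSemisimpleRing.exists_ringEquiv_pi_matrix_divisionRing R
  exact (HasStableRangeOne.pi fun _ ↦ hasStableRangeOne_matrix_divisionRing _).of_ringEquiv e

section Jacobson

variable {R : Type*} [Ring R]

theorem isUnit_of_sub_one_mem_ringJacobson {r : R} (hr : r - 1 ∈ Ring.jacobson R) :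
    IsUnit r := by
  have exists_left_inv : ∀ z : R, z - 1 ∈ Ring.jacobson R → ∃ s, s * z = 1 := fun z hz ↦ by
    rw [← Ideal.jacobson_bot] at hz
    obtain ⟨s, hs⟩ := Ideal.exists_mul_sub_mem_of_sub_one_mem_jacobson z hz
    exact ⟨s, by rwa [Ideal.mem_bot, sub_eq_zero] at hs⟩
  obtain ⟨s, hsr⟩ := exists_left_inv r hr
  have hs : s - 1 ∈ Ring.jacobson R := by
    have : s - 1 = -s * (r - 1) := by rw [mul_sub, neg_mul, hsr, mul_one]; abel
    exact this ▸ Ideal.mul_mem_left _ (-s) hr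
  obtain ⟨u, hus⟩ := exists_left_inv s hs
  have hrs : r * s = 1 := left_inv_eq_right_inv hus hsr ▸ hus
  exact isUnit_iff_exists.2 ⟨s, hrs, hsr⟩

theorem isLocalHom_of_ker_le_ringJacobson {S : Type*} [Ring S] (f : R →+* S)
    (hf : Function.Surjective f) (hker : RingHom.ker f ≤ Ring.jacobson R) : IsLocalHom f := by
  have isUnit_of_map_eq_one : ∀ r, f r = 1 → IsUnit r := fun r hr ↦
    isUnit_of_sub_one_mem_ringJacobson <| hker <| by
      rw [RingHom.mem_ker, map_sub, hr, map_one, sub_self]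
  refine ⟨fun a ha ↦ ?_⟩
  obtain ⟨c, hac, hca⟩ := isUnit_iff_exists.1 ha
  obtain ⟨b, rfl⟩ := hf c
  obtain ⟨r, hr⟩ := (isUnit_of_map_eq_one (a * b) (by rw [map_mul, hac])).exists_right_inv
  obtain ⟨l, hl⟩ := (isUnit_of_map_eq_one (b * a) (by rw [map_mul, hca])).exists_left_inv
  exact isUnit_iff_exists_and_exists.2
    ⟨⟨b * r, by rw [← mul_assoc, hr]⟩, l * b, by rw [mul_assoc, hl]⟩

theorem matrix_ringJacobson_le (n : Type*) [Fintype n] [DecidableEq n] :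
    (Ring.jacobson R).matrix n ≤ Ring.jacobson (Matrix n n R) := by
  simpa only [Ideal.jacobson_bot, Ideal.matrix_bot] using
    Ideal.matrix_jacobson_le (⊥ : Ideal R) (n := n)

theorem hasStableRangeOne_matrix_of_semilocal [IsSemisimpleRing (R ⧸ Ring.jacobson R)]
    (n : Type*) [Fintype n] [DecidableEq n] : HasStableRangeOne (Matrix n n R) := by
  let f : Matrix n n R →+* Matrix n n (R ⧸ Ring.jacobson R) :=
    (Ideal.Quotient.mk (Ring.jacobson R)).mapMatrix
  have hf : Function.Surjective f := fun M ↦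
    ⟨M.map (Function.surjInv Ideal.Quotient.mk_surjective),
      Matrix.ext fun i j ↦ Function.surjInv_eq Ideal.Quotient.mk_surjective (M i j)⟩
  have hker : RingHom.ker f ≤ Ring.jacobson (Matrix n n R) := fun M hM ↦
    matrix_ringJacobson_le n fun i j ↦ Ideal.Quotient.eq_zero_iff_mem.1 (congrFun₂ hM i j)
  have := isLocalHom_of_ker_le_ringJacobson f hf hker
  exact (hasStableRangeOne_of_isSemisimpleRing _).of_isLocalHom f hf

end Jacobson

theorem span_range_le_span_range_iff_exists_vecMul {R ι κ : Type*} [Semiring R] [Fintype ι]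
    {X : ι → R} {Y : κ → R} :
    Submodule.span Rᵐᵒᵖ (Set.range Y) ≤ Submodule.span Rᵐᵒᵖ (Set.range X) ↔
      ∃ C : Matrix ι κ R, X ᵥ* C = Y := by
  simp only [Submodule.span_le, Set.range_subset_iff, SetLike.mem_coe,
    Submodule.mem_span_range_iff_exists_fun]
  constructor
  · intro h
    choose c hc using h
    exact ⟨.of fun i j ↦ (c j i).unop, funext hc⟩
  · rintro ⟨C, rfl⟩ j
    exact ⟨fun i ↦ .op (C i j), rfl⟩

theorem HasStableRangeOne.exists_units_vecMul_eq {R ι : Type*} [Ring R] [Fintype ι]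
    [DecidableEq ι] (h : HasStableRangeOne (Matrix ι ι R)) {X Y : ι → R} {B C : Matrix ι ι R}
    (hC : X ᵥ* C = Y) (hB : Y ᵥ* B = X) : ∃ A : (Matrix ι ι R)ˣ, X ᵥ* A.val = Y := by
  obtain ⟨T, A, hA⟩ := h (show C * B + (1 - C * B) * 1 = 1 by rw [mul_one, add_sub_cancel])
  have hXT : X ᵥ* ((1 - C * B) * T) = 0 := by
    rw [← vecMul_vecMul, vecMul_sub, vecMul_one, ← vecMul_vecMul, hC, hB, sub_self, zero_vecMul]
  exact ⟨A, by rw [hA, vecMul_add, hC, hXT, add_zero]⟩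

theorem ternion_vector_orbits_general {R ι : Type*} [Ring R]
    [IsSemisimpleRing (R ⧸ Ring.jacobson R)] [Fintype ι] [DecidableEq ι] (X Y : ι → R) :
    (∃ A : (Matrix ι ι R)ˣ, X ᵥ* A.val = Y) ↔
      Submodule.span Rᵐᵒᵖ (Set.range X) = Submodule.span Rᵐᵒᵖ (Set.range Y) := by
  rw [le_antisymm_iff, span_range_le_span_range_iff_exists_vecMul,
    span_range_le_span_range_iff_exists_vecMul]
  constructor
  · rintro ⟨A, rfl⟩
    exact ⟨⟨A⁻¹.val, by rw [vecMul_vecMul, A.mul_inv, vecMul_one]⟩, A.val, rfl⟩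
  · rintro ⟨⟨B, hB⟩, C, hC⟩
    exact (hasStableRangeOne_matrix_of_semilocal ι).exists_units_vecMul_eq hC hB

instance isArtinianRing_ternions (F : Type) [Field F] : IsArtinianRing (ternions F) :=
  let S : Subalgebra F (Matrix (Fin 2) (Fin 2) F) :=
    { ternions F with
      algebraMap_mem' := fun r ↦ show algebraMap F (Matrix (Fin 2) (Fin 2) F) r 1 0 = 0 by
        simp [Matrix.algebraMap_matrix_apply] }
  IsArtinianRing.of_finite F S

/-- Two vectors of `R^{n+1}` (`R` the ring of ternions) lie in the same orbit of
`GL_{n+1}(R)` acting by right multiplication if and only if the right ideals generated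
by their coordinates coincide. -/
theorem ternion_vector_orbits (F : Type) [Field F] (n : ℕ) (hn : 1 ≤ n)
    (X Y : Fin (n + 1) → ternions F) :
    (∃ A : (Matrix (Fin (n + 1)) (Fin (n + 1)) (ternions F))ˣ, Matrix.vecMul X A.val = Y) ↔
      Submodule.span (ternions F)ᵐᵒᵖ (Set.range X) =
        Submodule.span (ternions F)ᵐᵒᵖ (Set.range Y) :=
  ternion_vector_orbits_general X Y
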